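/- Let p ≥ 11 be a prime and let a, b, c be nonzero elements of O_K, coprime in O_K, with a^p + b^p + c^p = 0. Then, after permuting a, b, c among themselves and multiplying the triple (a, b, c) by a suitable unit of O_K, one of the following two conditions holds: (1) 2 divides a, 2 does not divide b·c, and b is a square modulo 4·O_K; or (2) 2 does not divide a·b·c and the pair (a^p mod 4, b^p mod 4) is one of the four pairs (u, 1+2u), (3, u²), (1, u), (1, u²+2u) modulo 4·O_K. -/

import Mathlib

open Polynomial

/-- `K = ℚ(√5)`, the real quadratic field obtained by adjoining `√5` to `ℚ`. -/
noncomputable def K : IntermediateField ℚ ℝ := IntermediateField.adjoin ℚ {Real.sqrt 5}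

/-- `O_K`, the ring of integers of `K = ℚ(√5)`. -/
noncomputable abbrev OK : Type := NumberField.RingOfIntegers K

lemma sqrt5_mem : Real.sqrt 5 ∈ K :=
  IntermediateField.subset_adjoin ℚ {Real.sqrt 5} rfl

/-- `(1 + √5)/2` as an element of `K`. -/
noncomputable def uK : K :=
  ⟨(1 + Real.sqrt 5) / 2,
    div_mem (add_mem (one_mem K) sqrt5_mem)
      (by exact_mod_cast SubfieldClass.ratCast_mem K 2)⟩

lemma uK_integral : IsIntegral ℤ uK := by
  have h : IsIntegral ℤ ((1 + Real.sqrt 5) / 2 : ℝ) := by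
    refine ⟨X ^ 2 - X - 1, by monicity!, ?_⟩
    have h5 : Real.sqrt 5 ^ 2 = 5 := Real.sq_sqrt (by norm_num)
    simp only [eval₂_sub, eval₂_pow, eval₂_X, eval₂_one]
    nlinarith [h5]
  rw [show ((1 + Real.sqrt 5) / 2 : ℝ) = algebraMap K ℝ uK from rfl] at h
  exact (isIntegral_algebraMap_iff (algebraMap K ℝ).injective).mp h

/-- `u = (1 + √5)/2` as an element of `O_K`; it satisfies `u ^ 2 = 1 + u`. -/
noncomputable def u : OK := ⟨uK, uK_integral⟩

/-!
The class of `u` has order `6` in `(O_K / 4)ˣ`, and together with `-1` it generates this group of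
order `12`; hence every unit modulo `4` lifts to a unit of `O_K`. As `2` is inert, every element
prime to `2` is a unit modulo `4`.

If one of `a, b, c` is even, the other two are odd by coprimality, and scaling makes one of these
congruent to `1`, a square modulo `4`. If all three are odd, then `3 ∤ p`, since cubes of odd
elements are `1` modulo `2` and `1 + 1 + 1 ≠ 0`. An odd such `p` is prime to `6`, so every unit
modulo `4` is a `p`-th power of a unit, and it remains to list the solutions of `x + y + z = 0` in
`(O_K / 4)ˣ` up to scaling and permutation.

`O_K` is identified with `ℤ[ω]`, `ω² = 1 + ω`. In a quadratic algebra of squarefree discriminant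
`D`, an integral `z` of trace `t` and norm `n` satisfies `D * z.im² = t² - 4n`, so `z.im` is
integral, and then so is `z.re`.
-/

open QuadraticAlgebra
open scoped goldenRatio

section Conjugation

variable {R S : Type*} [CommRing R] [CommRing S] [Algebra R S]

lemma isIntegral_quadraticAlgebra_omega {a b : R} :
    IsIntegral R (ω : QuadraticAlgebra S (algebraMap R S a) (algebraMap R S b)) := by
  refine ⟨X ^ 2 - C b * X - C a, by monicity!, ?_⟩
  simp only [eval₂_sub, eval₂_mul, eval₂_X, eval₂_C, sq, omega_mul_omega_eq_algebraMap,
    IsScalarTower.algebraMap_apply R S (QuadraticAlgebra S _ _)]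
  ring

variable {a b : S} {z : QuadraticAlgebra S a b}

lemma isIntegral_quadraticAlgebra_star (hz : IsIntegral R z) : IsIntegral R (star z) := by
  refine hz.map_of_comp_eq (RingHom.id R) (starRingEnd _) (RingHom.ext fun r ↦ ?_)
  rw [RingHom.comp_apply, RingHom.comp_apply, RingHom.id_apply, IsScalarTower.algebraMap_apply R S]
  ext <;> simp [starRingEnd_apply]

lemma isIntegral_quadraticAlgebra_trace (hz : IsIntegral R z) : IsIntegral R z.trace := by
  rw [← isIntegral_algebraMap_iff (algebraMap_injective (a := a) (b := b)),
    algebraMap_trace_eq_add_star]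
  exact hz.add (isIntegral_quadraticAlgebra_star hz)

lemma isIntegral_quadraticAlgebra_norm (hz : IsIntegral R z) : IsIntegral R z.norm := by
  rw [← isIntegral_algebraMap_iff (algebraMap_injective (a := a) (b := b)),
    algebraMap_norm_eq_mul_star]
  exact hz.mul (isIntegral_quadraticAlgebra_star hz)

end Conjugation

section SquarefreeDiscriminant

variable {R F : Type*} [CommRing R] [IsDomain R] [UniqueFactorizationMonoid R] [Field F]
  [Algebra R F] [IsFractionRing R F]

lemma isIntegral_of_isIntegral_squarefree_mul_sq {d : R} (hd : Squarefree d) {x : F}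
    (hx : IsIntegral R (algebraMap R F d * x ^ 2)) : IsIntegral R x := by
  obtain ⟨m, hm⟩ := IsIntegrallyClosed.isIntegral_iff.mp hx
  have hdx : IsIntegral R (algebraMap R F d * x) := by
    refine .of_pow two_pos ?_
    rw [show (algebraMap R F d * x) ^ 2 = algebraMap R F (d * m) by rw [map_mul, hm]; ring]
    exact isIntegral_algebraMap
  obtain ⟨k, hk⟩ := IsIntegrallyClosed.isIntegral_iff.mp hdx
  have hdk : d ∣ k ^ 2 := by
    refine ⟨m, IsFractionRing.injective R F ?_⟩
    rw [map_pow, map_mul, hk, hm]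
    ring
  obtain ⟨y, rfl⟩ := (hd.dvd_pow_iff_dvd two_ne_zero).mp hdk
  have hd0 : algebraMap R F d ≠ 0 :=
    (map_ne_zero_iff _ (IsFractionRing.injective R F)).mpr hd.ne_zero
  rw [map_mul] at hk
  rw [← mul_left_cancel₀ hd0 hk]
  exact isIntegral_algebraMap

theorem isIntegral_re_and_isIntegral_im {a b : R} (hD : Squarefree (b ^ 2 + 4 * a))
    {z : QuadraticAlgebra F (algebraMap R F a) (algebraMap R F b)} (hz : IsIntegral R z) :
    IsIntegral R z.re ∧ IsIntegral R z.im := by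
  have him : IsIntegral R z.im := by
    refine isIntegral_of_isIntegral_squarefree_mul_sq hD ?_
    have hdisc : algebraMap R F (b ^ 2 + 4 * a) * z.im ^ 2 =
        z.trace ^ 2 - algebraMap R F 4 * z.norm := by
      simp only [trace_def, norm_def, map_add, map_pow, map_mul, map_ofNat]
      ring
    rw [hdisc]
    exact ((isIntegral_quadraticAlgebra_trace hz).pow 2).sub
      (isIntegral_algebraMap.mul (isIntegral_quadraticAlgebra_norm hz))
  refine ⟨?_, him⟩
  have hre : algebraMap F _ z.re = z - algebraMap F _ z.im * ω := by
    ext <;> simp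
  rw [← isIntegral_algebraMap_iff (algebraMap_injective (a := algebraMap R F a)
    (b := algebraMap R F b)), hre]
  exact hz.sub (him.algebraMap.mul isIntegral_quadraticAlgebra_omega)

end SquarefreeDiscriminant

lemma not_dvd_of_dvd_of_sum_pow_eq_zero {R : Type*} [CommRing R] {q : R} (hq : Prime q)
    {n : ℕ} (hn : n ≠ 0) {v : Fin 3 → R} (hcop : ∀ d, (∀ i, d ∣ v i) → IsUnit d)
    (hsum : ∑ i, v i ^ n = 0) {i j : Fin 3} (hij : i ≠ j) (hi : q ∣ v i) : ¬ q ∣ v j := by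
  intro hj
  refine hq.not_isUnit (hcop q fun k ↦ ?_)
  by_cases hki : k = i
  · exact hki ▸ hi
  by_cases hkj : k = j
  · exact hkj ▸ hj
  have hrest : ∀ l ∈ Finset.univ.erase k, q ∣ v l ^ n := by
    intro l hl
    have hlk := Finset.ne_of_mem_erase hl
    obtain rfl | rfl : l = i ∨ l = j := by lia
    · exact dvd_pow hi hn
    · exact dvd_pow hj hn
  have hk : q ∣ v k ^ n := by
    rw [eq_neg_of_add_eq_zero_left ((Finset.add_sum_erase _ _ (Finset.mem_univ k)).trans hsum),
      dvd_neg]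
    exact Finset.dvd_sum hrest
  exact hq.dvd_of_dvd_pow hk

namespace GoldenField

/-- `R[ω]` with `ω² = 1 + ω`, playing the role of `R ⊗ O_K`. -/
abbrev GoldenAlgebra (R : Type*) [CommRing R] : Type _ := QuadraticAlgebra R 1 1

lemma sq_ne_one_add_self (r : ℚ) : r ^ 2 ≠ 1 + 1 * r := by
  intro h
  have hR : (r : ℝ) ^ 2 = 1 + r := by exact_mod_cast (one_mul r ▸ h)
  have hroots : ((r : ℝ) - φ) * (r - ψ) = 0 := by
    linear_combination hR - r * Real.goldenRatio_add_goldenConj + Real.goldenRatio_mul_goldenConj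
  rcases mul_eq_zero.mp hroots with h | h
  · exact Real.goldenRatio_irrational ⟨r, sub_eq_zero.mp h⟩
  · exact Real.goldenConj_irrational ⟨r, sub_eq_zero.mp h⟩

/-- The real embedding of `ℚ[ω]` sending `ω` to the golden ratio; its image is `K`. -/
noncomputable def toReal : GoldenAlgebra ℚ →ₐ[ℚ] ℝ :=
  lift ⟨φ, by rw [← sq, Real.goldenRatio_sq, one_smul, one_smul, add_comm]⟩

lemma toReal_apply (z : GoldenAlgebra ℚ) : toReal z = z.re + z.im * φ := by
  simp [toReal, Rat.smul_def]

instance : Fact (∀ r : ℚ, r ^ 2 ≠ 1 + 1 * r) := ⟨sq_ne_one_add_self⟩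

lemma toReal_injective : Function.Injective toReal :=
  toReal.toRingHom.injective

lemma exists_toReal_eq {x : ℝ} (hx : x ∈ K) : ∃ z, toReal z = x := by
  have hle : K ≤ toReal.fieldRange := by
    rw [K, IntermediateField.adjoin_le_iff, Set.singleton_subset_iff]
    refine ⟨(⟨-1, 2⟩ : GoldenAlgebra ℚ), (toReal_apply _).trans ?_⟩
    push_cast [Real.goldenRatio]
    ring
  exact hle hx

/-- Base change `ℤ[ω] → R[ω]` of the golden algebra along `ℤ → R`. -/
def castHom (R : Type*) [CommRing R] : GoldenAlgebra ℤ →+* GoldenAlgebra R where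
  toFun z := ⟨z.re, z.im⟩
  map_zero' := by ext <;> simp
  map_one' := by ext <;> simp
  map_add' z w := by ext <;> simp
  map_mul' z w := by ext <;> simp

lemma castHom_injective {R : Type*} [CommRing R] [CharZero R] :
    Function.Injective (castHom R) := by
  intro z w h
  ext
  · exact Int.cast_injective (congrArg QuadraticAlgebra.re h)
  · exact Int.cast_injective (congrArg QuadraticAlgebra.im h)

lemma castHom_zmod_eq_zero_iff {n : ℕ} {z : GoldenAlgebra ℤ} :
    castHom (ZMod n) z = 0 ↔ (n : GoldenAlgebra ℤ) ∣ z := by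
  rw [← Int.cast_natCast (R := GoldenAlgebra ℤ), ← eq_intCast (algebraMap ℤ (GoldenAlgebra ℤ)),
    algebraMap_dvd_iff, ← ZMod.intCast_zmod_eq_zero_iff_dvd,
    ← ZMod.intCast_zmod_eq_zero_iff_dvd, QuadraticAlgebra.ext_iff]
  rfl

lemma u_mul_u : u * u = (1 : ℤ) • (1 : OK) + (1 : ℤ) • u := by
  refine NumberField.RingOfIntegers.coe_injective (Subtype.val_injective ?_)
  rw [one_smul, one_smul, map_mul, map_add, map_one]
  change φ * φ = 1 + φ
  rw [← sq, Real.goldenRatio_sq, add_comm]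

/-- The homomorphism `ℤ[ω] → O_K` sending `ω` to `u`. -/
noncomputable def toRingOfIntegers : GoldenAlgebra ℤ →ₐ[ℤ] OK :=
  lift ⟨u, u_mul_u⟩

lemma toRingOfIntegers_omega : toRingOfIntegers ω = u := by
  simp [toRingOfIntegers]

lemma coe_toRingOfIntegers (z : GoldenAlgebra ℤ) :
    (((toRingOfIntegers z : OK) : K) : ℝ) = toReal (castHom ℚ z) := by
  have coe_u : ((u : K) : ℝ) = φ := rfl
  simp [toRingOfIntegers, toReal_apply, castHom, coe_u]

lemma toRingOfIntegers_injective : Function.Injective toRingOfIntegers := by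
  intro z w h
  apply castHom_injective (R := ℚ)
  apply toReal_injective
  rw [← coe_toRingOfIntegers, ← coe_toRingOfIntegers, h]

lemma toRingOfIntegers_surjective : Function.Surjective toRingOfIntegers := by
  intro w
  obtain ⟨z, hz⟩ := exists_toReal_eq (w : K).2
  have hdisc : Squarefree (1 ^ 2 + 4 * 1 : ℤ) :=
    (Int.prime_iff_natAbs_prime.mpr (by norm_num)).squarefree
  have hint : IsIntegral ℤ z := by
    rw [← isIntegral_algHom_iff (toReal.restrictScalars ℤ) toReal_injective,
      AlgHom.restrictScalars_apply, hz]
    exact w.2.map (K.val.restrictScalars ℤ)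
  obtain ⟨hre, him⟩ := isIntegral_re_and_isIntegral_im (a := (1 : ℤ)) (b := 1) hdisc hint
  obtain ⟨i, hi⟩ := IsIntegrallyClosed.isIntegral_iff.mp hre
  obtain ⟨j, hj⟩ := IsIntegrallyClosed.isIntegral_iff.mp him
  refine ⟨⟨i, j⟩, NumberField.RingOfIntegers.coe_injective (Subtype.val_injective ?_)⟩
  rw [coe_toRingOfIntegers, ← hz]
  exact congrArg toReal (QuadraticAlgebra.ext hi hj)

/-- The identification of `O_K` with `ℤ[ω]` under which `u` corresponds to `ω`. -/
noncomputable def ringOfIntegersEquiv : GoldenAlgebra ℤ ≃+* OK :=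
  RingEquiv.ofBijective toRingOfIntegers ⟨toRingOfIntegers_injective, toRingOfIntegers_surjective⟩

/-- Reduction of `O_K` modulo `n`, with the quotient `O_K / n` encoded as `(ℤ/n)[ω]`. -/
noncomputable def reduce (n : ℕ) : OK →+* GoldenAlgebra (ZMod n) :=
  (castHom (ZMod n)).comp ringOfIntegersEquiv.symm

lemma reduce_u (n : ℕ) : reduce n u = ω := by
  have hu : ringOfIntegersEquiv.symm u = ω :=
    ringOfIntegersEquiv.symm_apply_eq.mpr toRingOfIntegers_omega.symm
  rw [reduce, RingHom.comp_apply, RingHom.coe_coe, hu]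
  ext <;> simp [castHom]

lemma reduce_eq_zero_iff {n : ℕ} {x : OK} : reduce n x = 0 ↔ (n : OK) ∣ x := by
  rw [reduce, RingHom.comp_apply, castHom_zmod_eq_zero_iff,
    ← map_dvd_iff ringOfIntegersEquiv.symm, map_natCast]
  rfl

lemma reduce_eq_reduce_iff {n : ℕ} {x y : OK} : reduce n x = reduce n y ↔ (n : OK) ∣ x - y := by
  rw [← sub_eq_zero, ← map_sub, reduce_eq_zero_iff]

/-- The residue ring `O_K / 4`, encoded as `(ℤ/4)[ω]`, where `decide` applies. Its units
are the `z` with `2 * z ≠ 0`, a condition that `decide` can evaluate cheaply. -/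
abbrev ResidueRing : Type := GoldenAlgebra (ZMod 4)

instance : Fintype ResidueRing := .ofEquiv _ (equivProd 1 1).symm

lemma pow_six_of_two_mul_ne_zero : ∀ {z : ResidueRing}, 2 * z ≠ 0 → z ^ 6 = 1 := by
  decide

lemma isUnit_iff_two_mul_ne_zero {z : ResidueRing} : IsUnit z ↔ 2 * z ≠ 0 := by
  refine ⟨fun hz h ↦ ?_, fun hz ↦ .of_pow_eq_one (pow_six_of_two_mul_ne_zero hz) (by decide)⟩
  exact absurd (hz.mul_left_eq_zero.mp h) (by decide)

lemma two_mul_pow_three_of_two_mul_ne_zero :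
    ∀ {z : ResidueRing}, 2 * z ≠ 0 → 2 * z ^ 3 = 2 := by
  decide

lemma exists_eq_omega_pow_or_eq_neg_omega_pow : ∀ {z : ResidueRing}, 2 * z ≠ 0 →
    ∃ k : Fin 6, z = ω ^ (k : ℕ) ∨ z = -ω ^ (k : ℕ) := by
  decide

/-- The predicate that `(z, w)` is one of the pairs `(u, 1 + 2u)`, `(3, u²)`, `(1, u)` and
`(1, u² + 2u)`, the class of `u` being `ω`. -/
def IsNormalPair (z w : ResidueRing) : Prop :=
  (z = ω ∧ w = 1 + 2 * ω) ∨ (z = 3 ∧ w = ω ^ 2) ∨ (z = 1 ∧ w = ω) ∨ (z = 1 ∧ w = ω ^ 2 + 2 * ω)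

instance (z w : ResidueRing) : Decidable (IsNormalPair z w) := by
  unfold IsNormalPair
  infer_instance

lemma exists_isNormalPair_of_one : ∀ {w : ResidueRing}, 2 * w ≠ 0 → 2 * (-1 - w) ≠ 0 →
    ∃ e : ResidueRing, 2 * e ≠ 0 ∧ ∃ σ : Equiv.Perm (Fin 3),
      IsNormalPair (e * ![1, w, -1 - w] (σ 0)) (e * ![1, w, -1 - w] (σ 1)) := by
  decide

lemma exists_isNormalPair {x : Fin 3 → ResidueRingˣ} (hx : ∑ i, (x i : ResidueRing) = 0) :
    ∃ (e : ResidueRingˣ) (σ : Equiv.Perm (Fin 3)),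
      IsNormalPair ↑(e * x (σ 0)) ↑(e * x (σ 1)) := by
  obtain ⟨w, hw⟩ : ∃ w : Fin 3 → ResidueRingˣ, ∀ i, w i = (x 0)⁻¹ * x i := ⟨_, fun _ ↦ rfl⟩
  have hw0 : w 0 = 1 := by rw [hw, inv_mul_cancel]
  have hwsum : ∑ i, (w i : ResidueRing) = 0 := by
    simp only [hw, Units.val_mul, ← Finset.mul_sum, hx, mul_zero]
  have hw2 : (w 2 : ResidueRing) = -1 - w 1 := by
    rw [Fin.sum_univ_three, hw0, Units.val_one] at hwsum
    linear_combination hwsum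
  obtain ⟨e, he, σ, hσ⟩ := exists_isNormalPair_of_one
    (isUnit_iff_two_mul_ne_zero.mp (w 1).isUnit)
    (isUnit_iff_two_mul_ne_zero.mp (hw2 ▸ (w 2).isUnit))
  have hentry (i : Fin 3) : (w i : ResidueRing) = ![1, (w 1 : ResidueRing), -1 - w 1] i := by
    fin_cases i
    · simp [hw0]
    · rfl
    · exact hw2
  refine ⟨(isUnit_iff_two_mul_ne_zero.mpr he).unit * (x 0)⁻¹, σ, ?_⟩
  rw [← hentry, ← hentry, hw, hw] at hσ
  simpa only [mul_assoc, Units.val_mul, IsUnit.unit_spec] using hσ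

lemma not_three_dvd_of_sum_pow_eq_zero {n : ℕ} {x : Fin 3 → ResidueRingˣ}
    (hx : ∑ i, (x i : ResidueRing) ^ n = 0) : ¬ 3 ∣ n := by
  rintro ⟨m, rfl⟩
  have hcube (i : Fin 3) : 2 * (x i : ResidueRing) ^ (3 * m) = 2 := by
    rw [mul_comm 3 m, pow_mul, ← Units.val_pow_eq_pow_val]
    exact two_mul_pow_three_of_two_mul_ne_zero (isUnit_iff_two_mul_ne_zero.mp (Units.isUnit _))
  have htwo := congrArg (2 * ·) hx
  simp only [Finset.mul_sum, hcube, mul_zero] at htwo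
  exact absurd htwo (by decide)

lemma exists_pow_eq_of_coprime_six {n : ℕ} (hn : n.Coprime 6) (e : ResidueRingˣ) :
    ∃ f : ResidueRingˣ, f ^ n = e := by
  have he : e ^ 6 = 1 :=
    Units.ext (pow_six_of_two_mul_ne_zero (isUnit_iff_two_mul_ne_zero.mp e.isUnit))
  obtain ⟨m, hm⟩ := exists_pow_eq_self_of_coprime
    (hn.coprime_dvd_right (orderOf_dvd_of_pow_eq_one he))
  exact ⟨e ^ m, by rw [pow_right_comm, hm]⟩

lemma four_dvd_sub_iff {x y : OK} : 4 ∣ x - y ↔ reduce 4 x = reduce 4 y := by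
  rw [reduce_eq_reduce_iff, Nat.cast_ofNat]

lemma two_dvd_iff {x : OK} : 2 ∣ x ↔ 2 * reduce 4 x = 0 := by
  rw [← map_ofNat (reduce 4) 2, ← map_mul, reduce_eq_zero_iff,
    show ((4 : ℕ) : OK) = 2 * 2 by norm_num, mul_dvd_mul_iff_left two_ne_zero]

lemma isUnit_reduce_four_iff {x : OK} : IsUnit (reduce 4 x) ↔ ¬ 2 ∣ x := by
  rw [isUnit_iff_two_mul_ne_zero, Ne, two_dvd_iff]

lemma prime_two : Prime (2 : OK) := by
  refine ⟨two_ne_zero, fun h ↦ isUnit_reduce_four_iff.mp ?_ (h.dvd : (2 : OK) ∣ 1), fun x y ↦ ?_⟩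
  · rw [map_one]
    exact isUnit_one
  · contrapose!
    simp only [← isUnit_reduce_four_iff, map_mul]
    exact fun h ↦ h.1.mul h.2

/-- `u` as a unit of `O_K`, with inverse `u - 1`. -/
noncomputable def uUnit : OKˣ :=
  Units.mkOfMulEqOne u (u - 1) (by linear_combination u_mul_u)

lemma exists_unit_reduce_four_eq (e : ResidueRingˣ) : ∃ ξ : OKˣ, reduce 4 ξ = e := by
  have hu : reduce 4 uUnit = ω := reduce_u 4
  obtain ⟨k, hk | hk⟩ :=
    exists_eq_omega_pow_or_eq_neg_omega_pow (isUnit_iff_two_mul_ne_zero.mp e.isUnit)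
  · exact ⟨uUnit ^ (k : ℕ), by rw [Units.val_pow_eq_pow_val, map_pow, hu, hk]⟩
  · exact ⟨-uUnit ^ (k : ℕ), by
      rw [Units.val_neg, Units.val_pow_eq_pow_val, map_neg, map_pow, hu, hk]⟩

lemma exists_unit_four_dvd_mul_sub_one {x : OK} (hx : ¬ 2 ∣ x) : ∃ ξ : OKˣ, 4 ∣ ξ * x - 1 := by
  obtain ⟨e, he⟩ := isUnit_reduce_four_iff.mpr hx
  obtain ⟨ξ, hξ⟩ := exists_unit_reduce_four_eq e⁻¹
  refine ⟨ξ, four_dvd_sub_iff.mpr ?_⟩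
  rw [map_mul, hξ, ← he, Units.inv_mul, map_one]

lemma exists_unit_isNormalPair {p : ℕ} (hp : Odd p) {v : Fin 3 → OK} (hv : ∀ i, ¬ 2 ∣ v i)
    (hsum : ∑ i, v i ^ p = 0) :
    ∃ (ξ : OKˣ) (σ : Equiv.Perm (Fin 3)),
      IsNormalPair (reduce 4 ((ξ * v (σ 0)) ^ p)) (reduce 4 ((ξ * v (σ 1)) ^ p)) := by
  choose x hx using fun i ↦ isUnit_reduce_four_iff.mpr (hv i)
  have hxsum : ∑ i, (x i : ResidueRing) ^ p = 0 := by
    simp only [hx, ← map_pow, ← map_sum, hsum, map_zero]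
  have hp6 : p.Coprime 6 :=
    (Nat.coprime_two_right.mpr hp).mul_right
      ((Nat.Prime.coprime_iff_not_dvd Nat.prime_three).mpr
        (not_three_dvd_of_sum_pow_eq_zero hxsum)).symm
  obtain ⟨e, σ, hσ⟩ := exists_isNormalPair (x := fun i ↦ x i ^ p) hxsum
  obtain ⟨f, rfl⟩ := exists_pow_eq_of_coprime_six hp6 e
  obtain ⟨ξ, hξ⟩ := exists_unit_reduce_four_eq f
  refine ⟨ξ, σ, ?_⟩
  simpa only [map_pow, map_mul, hξ, ← hx, mul_pow, Units.val_mul, Units.val_pow_eq_pow_val]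
    using hσ

lemma isNormalPair_reduce_four_iff {x y : OK} :
    IsNormalPair (reduce 4 x) (reduce 4 y) ↔
      (4 ∣ x - u ∧ 4 ∣ y - (1 + 2 * u)) ∨ (4 ∣ x - 3 ∧ 4 ∣ y - u ^ 2) ∨
        (4 ∣ x - 1 ∧ 4 ∣ y - u) ∨ (4 ∣ x - 1 ∧ 4 ∣ y - (u ^ 2 + 2 * u)) := by
  simp only [IsNormalPair, four_dvd_sub_iff, map_add, map_mul, map_pow, map_one, map_ofNat,
    reduce_u]

end GoldenField

open GoldenField

theorem normalisation_of_solutions_general {p : ℕ} (hp : Odd p) {a b c : OK}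
    (hcop : ∀ d : OK, d ∣ a → d ∣ b → d ∣ c → IsUnit d)
    (hfermat : a ^ p + b ^ p + c ^ p = 0) :
    ∃ (ξ : OKˣ) (σ : Equiv.Perm (Fin 3)) (a' b' c' : OK),
      a' = (ξ : OK) * ![a, b, c] (σ 0) ∧
      b' = (ξ : OK) * ![a, b, c] (σ 1) ∧
      c' = (ξ : OK) * ![a, b, c] (σ 2) ∧
      (((2 : OK) ∣ a' ∧ ¬ (2 : OK) ∣ b' * c' ∧ ∃ x : OK, (4 : OK) ∣ b' - x ^ 2) ∨
        (¬ (2 : OK) ∣ a' * b' * c' ∧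
          (((4 : OK) ∣ a' ^ p - u ∧ (4 : OK) ∣ b' ^ p - (1 + 2 * u)) ∨
            ((4 : OK) ∣ a' ^ p - 3 ∧ (4 : OK) ∣ b' ^ p - u ^ 2) ∨
            ((4 : OK) ∣ a' ^ p - 1 ∧ (4 : OK) ∣ b' ^ p - u) ∨
            ((4 : OK) ∣ a' ^ p - 1 ∧ (4 : OK) ∣ b' ^ p - (u ^ 2 + 2 * u))))) := by
  set v : Fin 3 → OK := ![a, b, c]
  have hsum : ∑ i, v i ^ p = 0 := (Fin.sum_univ_three _).trans hfermat
  have hcop' (d : OK) (hd : ∀ i, d ∣ v i) : IsUnit d := hcop d (hd 0) (hd 1) (hd 2)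
  by_cases heven : ∃ i, 2 ∣ v i
  · obtain ⟨i, hi⟩ := heven
    have hodd (j : Fin 3) (hj : i ≠ j) : ¬ 2 ∣ v j :=
      not_dvd_of_dvd_of_sum_pow_eq_zero prime_two hp.pos.ne' hcop' hsum hj hi
    obtain ⟨σ, rfl⟩ : ∃ σ : Equiv.Perm (Fin 3), σ 0 = i := ⟨.swap 0 i, Equiv.swap_apply_left 0 i⟩
    have hodd1 := hodd (σ 1) (σ.injective.ne (by decide))
    have hodd2 := hodd (σ 2) (σ.injective.ne (by decide))
    obtain ⟨ξ, hξ⟩ := exists_unit_four_dvd_mul_sub_one hodd1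
    refine ⟨ξ, σ, _, _, _, rfl, rfl, rfl, .inl ⟨hi.mul_left _, ?_, 1, by rwa [one_pow]⟩⟩
    exact prime_two.not_dvd_mul (mt Units.dvd_mul_left.mp hodd1) (mt Units.dvd_mul_left.mp hodd2)
  · push Not at heven
    obtain ⟨ξ, σ, hnormal⟩ := exists_unit_isNormalPair hp heven hsum
    refine ⟨ξ, σ, _, _, _, rfl, rfl, rfl, .inr ⟨?_, isNormalPair_reduce_four_iff.mp hnormal⟩⟩
    have hodd (i : Fin 3) : ¬ 2 ∣ (ξ : OK) * v i := mt Units.dvd_mul_left.mp (heven i)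
    exact prime_two.not_dvd_mul (prime_two.not_dvd_mul (hodd _) (hodd _)) (hodd _)

set_option maxHeartbeats 1000000 in
/-- **Lemma 1.** Let `p ≥ 11` be prime and `a, b, c` nonzero coprime elements of
`O_K` with `a^p + b^p + c^p = 0`.  After permuting `a, b, c` and multiplying the
triple by a suitable unit `ξ` of `O_K`, either (1) `2 ∣ a'`, `2 ∤ b'·c'` and `b'`
is a square mod `4·O_K`, or (2) `2 ∤ a'·b'·c'` and `(a'^p, b'^p)` is congruent
mod `4·O_K` to one of `(u, 1+2u)`, `(3, u²)`, `(1, u)`, `(1, u²+2u)`. -/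
theorem normalisation_of_solutions (p : ℕ) (hp : p.Prime) (hp11 : 11 ≤ p)
    (a b c : OK) (ha : a ≠ 0) (hb : b ≠ 0) (hc : c ≠ 0)
    (hcop : ∀ d : OK, d ∣ a → d ∣ b → d ∣ c → IsUnit d)
    (hfermat : a ^ p + b ^ p + c ^ p = 0) :
    ∃ (ξ : OKˣ) (σ : Equiv.Perm (Fin 3)) (a' b' c' : OK),
      a' = (ξ : OK) * ![a, b, c] (σ 0) ∧
      b' = (ξ : OK) * ![a, b, c] (σ 1) ∧
      c' = (ξ : OK) * ![a, b, c] (σ 2) ∧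
      (((2 : OK) ∣ a' ∧ ¬ (2 : OK) ∣ b' * c' ∧ ∃ x : OK, (4 : OK) ∣ b' - x ^ 2) ∨
        (¬ (2 : OK) ∣ a' * b' * c' ∧
          (((4 : OK) ∣ a' ^ p - u ∧ (4 : OK) ∣ b' ^ p - (1 + 2 * u)) ∨
            ((4 : OK) ∣ a' ^ p - 3 ∧ (4 : OK) ∣ b' ^ p - u ^ 2) ∨
            ((4 : OK) ∣ a' ^ p - 1 ∧ (4 : OK) ∣ b' ^ p - u) ∨
            ((4 : OK) ∣ a' ^ p - 1 ∧ (4 : OK) ∣ b' ^ p - (u ^ 2 + 2 * u))))) := by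
  exact normalisation_of_solutions_general (hp.odd_of_ne_two (by lia)) hcop hfermat
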